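/- If A and B are n×n complex matrices with A·A* = w₁·I, B·B* = w₂·I, A·B = B·A, and additionally A·B* = B*·A (which follows when A, B are ζ-circulant), then the 2n×2n block matrix [[A, B], [−B*, A*]] satisfies W·W* = (w₁+w₂)·I₂ₙ, provided A·Bᴴ = B·Aᴴ. -/

import Mathlib

open scoped ComplexOrder in
theorem conj_mul_self_aux (n : ℕ) (A : Matrix (Fin n) (Fin n) ℂ) (w : ℝ)
    (hA : A * A.conjTranspose = w • 1) : A.conjTranspose * A = w • 1 := by
  by_cases hw : w = 0
  · subst hw
    rw [zero_smul] at hA ⊢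
    rw [Matrix.self_mul_conjTranspose_eq_zero] at hA
    simp [hA]
  · have h : A * (w⁻¹ • A.conjTranspose) = 1 := by
      rw [Matrix.mul_smul, hA, smul_smul, inv_mul_cancel₀ hw, one_smul]
    have h2 := mul_eq_one_comm.mp h
    rw [Matrix.smul_mul] at h2
    rw [← h2, smul_smul, mul_inv_cancel₀ hw, one_smul]

theorem stmt_11 (n : ℕ) (A B : Matrix (Fin n) (Fin n) ℂ) (w₁ w₂ : ℝ)
    (hA : A * A.conjTranspose = w₁ • 1) (hB : B * B.conjTranspose = w₂ • 1)
    (hAB : A * B = B * A)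
    (hcomm : A * B.conjTranspose = B * A.conjTranspose)
    (hcomm2 : A.conjTranspose * B = B * A.conjTranspose) :
    (Matrix.fromBlocks A B (-B.conjTranspose) A.conjTranspose) *
      (Matrix.fromBlocks A B (-B.conjTranspose) A.conjTranspose).conjTranspose
      = (w₁ + w₂) • 1 := by
  have hA' := conj_mul_self_aux n A w₁ hA
  have hB' := conj_mul_self_aux n B w₂ hB
  have h3 : B.conjTranspose * A.conjTranspose = A.conjTranspose * B.conjTranspose := by
    rw [← Matrix.conjTranspose_mul, ← Matrix.conjTranspose_mul, hAB]
  rw [Matrix.fromBlocks_conjTranspose, Matrix.fromBlocks_multiply, ← Matrix.fromBlocks_one,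
    Matrix.fromBlocks_smul]
  simp only [Matrix.conjTranspose_neg, Matrix.conjTranspose_conjTranspose, Matrix.mul_neg,
    Matrix.neg_mul, neg_neg, hA, hB, hA', hB', hAB, h3, neg_add_cancel, smul_zero, add_smul]
  rw [add_comm (w₂ • (1 : Matrix (Fin n) (Fin n) ℂ))]
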